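/- arXiv:1406.6210 — 2 statements merged into one kernel-verified Lean document; each statement's English description precedes it below -/
import Mathlib

section
/- Let L > 3 be an odd integer divisible by 3 such that every prime factor of L other than 3 is congruent to 5 modulo 8. (i) If 9 does not divide L, then M(L,3) = M^e(L,3) = (L + 1)/4. (ii) If 9 divides L but 27 does not divide L, then M(L,3) = M^e(L,3) = (L − 1)/4. -/
open Finset

/-- The set of differences of a codeword `I ⊆ ℤ_L`. -/
def dset {L : ℕ} (I : Finset (ZMod L)) : Finset (ZMod L) :=
  (I ×ˢ I).image fun p => p.1 - p.2

/-- The set of nonzero differences. -/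
def dstar {L : ℕ} (I : Finset (ZMod L)) : Finset (ZMod L) := dset I \ {0}

/-- A conflict-avoiding code of length `L` and weight `ω`. -/
def IsCAC (L ω : ℕ) (C : Finset (Finset (ZMod L))) : Prop :=
  (∀ I ∈ C, I.card = ω) ∧
  ∀ I ∈ C, ∀ J ∈ C, I ≠ J → Disjoint (dstar I) (dstar J)

/-- `M(L,ω)`: the maximum size of a CAC of length `L` and weight `ω`. -/
noncomputable def MCAC (L ω : ℕ) : ℕ :=
  sSup {n | ∃ C : Finset (Finset (ZMod L)), IsCAC L ω C ∧ C.card = n}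

/-- An equi-difference codeword of weight three: `I = {0, g, 2g}` for some generator
`1 ≤ g ≤ L/2`. -/
def IsEquiDiff {L : ℕ} (I : Finset (ZMod L)) : Prop :=
  ∃ g : ℕ, 1 ≤ g ∧ 2 * g ≤ L ∧ I = {0, (g : ZMod L), ((2 * g : ℕ) : ZMod L)}

/-- `M^e(L,ω)`: the maximum size of a CAC of length `L` and weight `ω` all of whose
codewords are equi-difference. -/
noncomputable def MeCAC (L ω : ℕ) : ℕ :=
  sSup {n | ∃ C : Finset (Finset (ZMod L)),
    IsCAC L ω C ∧ (∀ I ∈ C, IsEquiDiff I) ∧ C.card = n}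

/-- The leave of a CAC `C` of length `L`: `Λ = ℤ_L \ ⋃_{I ∈ C} d(I)`. -/
def leave {L : ℕ} (C : Finset (Finset (ZMod L))) : Set (ZMod L) :=
  Set.univ \ ⋃ I ∈ C, (dset I : Set (ZMod L))

theorem exF (m : ℕ) : m ≠ 0 → (∀ p : ℕ, p.Prime → p ∣ m → p % 8 = 5) →
    ∃ f : ℤ → Prop, (∀ x y : ℤ, (m : ℤ) ∣ x - y → (f x ↔ f y)) ∧ (∀ x, f (-x) ↔ f x) ∧
      ∀ x, ¬ (m : ℤ) ∣ x → (f (2 * x) ↔ ¬ f x) := by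
  induction m using induction_on_primes with
  | zero => intro h; exact absurd rfl h
  | one => 
    intro _ _
    exact ⟨fun _ => True, by simp, by simp, by simp⟩
  | prime_mul p m hpp ih =>
    intro h0 hp
    have hm0 : m ≠ 0 := by rintro rfl; simp at h0
    obtain ⟨f, f1, f2, f3⟩ := ih hm0 (fun q hq hqm => hp q hq (hqm.mul_left p))
    have hp5 := hp p hpp (dvd_mul_right p m)
    haveI : Fact p.Prime := ⟨hpp⟩
    have hp2 : p ≠ 2 := by rintro rfl; omega
    have hpz : (p : ℤ) ≠ 0 := by exact_mod_cast hpp.ne_zero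
    have hpi : Prime (p : ℤ) := Nat.prime_iff_prime_int.mp hpp
    have hs2 : legendreSym p 2 = -1 := by
      rw [legendreSym.at_two hp2, ZMod.χ₈_nat_eq_if_mod_eight]
      have : p % 2 ≠ 0 := by omega
      simp [hp5, this]
    have hsn : legendreSym p (-1) = 1 := by
      rw [legendreSym.at_neg_one hp2, ZMod.χ₄_nat_eq_if_mod_four]
      have : p % 2 ≠ 0 := by omega
      have h4 : p % 4 = 1 := by omega
      simp [h4, this]
    have hd2 : ∀ x : ℤ, (p : ℤ) ∣ 2 * x ↔ (p : ℤ) ∣ x := by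
      intro x
      constructor
      · intro h
        rcases hpi.dvd_or_dvd h with h | h
        · exfalso
          have : p ∣ 2 := by exact_mod_cast h
          have := Nat.le_of_dvd (by norm_num) this
          interval_cases p <;> omega
        · exact h
      · exact fun h => h.mul_left 2
    refine ⟨fun x => ((p : ℤ) ∣ x ∧ f (x / p)) ∨ (¬ (p : ℤ) ∣ x ∧ legendreSym p x = 1), ?_, ?_, ?_⟩
    · intro x y hxy
      push_cast at hxy
      have hpxy : (p : ℤ) ∣ x - y := (dvd_mul_right _ _).trans hxy
      have hiff : (p : ℤ) ∣ x ↔ (p : ℤ) ∣ y := (dvd_iff_dvd_of_dvd_sub hpxy)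
      by_cases hx : (p : ℤ) ∣ x
      · have hy := hiff.mp hx
        simp only [hx, hy, true_and, not_true, false_and, or_false]
        obtain ⟨a, rfl⟩ := hx
        obtain ⟨b, rfl⟩ := hy
        rw [Int.mul_ediv_cancel_left _ hpz, Int.mul_ediv_cancel_left _ hpz]
        apply f1
        rw [← mul_sub] at hxy
        exact Int.dvd_of_mul_dvd_mul_left hpz hxy
      · have hy : ¬ (p : ℤ) ∣ y := fun h => hx (hiff.mpr h)
        simp only [hx, hy, false_and, not_false_eq_true, true_and, false_or]
        rw [legendreSym.mod p x, legendreSym.mod p y,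
          Int.emod_eq_emod_iff_emod_sub_eq_zero.mpr (Int.emod_eq_zero_of_dvd hpxy)]
    · intro x
      by_cases hx : (p : ℤ) ∣ x
      · simp only [dvd_neg, hx, true_and, not_true, false_and, or_false]
        rw [Int.neg_ediv_of_dvd hx, f2]
      · simp only [dvd_neg, hx, false_and, not_false_eq_true, true_and, false_or]
        rw [neg_eq_neg_one_mul, legendreSym.mul, hsn, one_mul]
    · intro x hmx
      by_cases hx : (p : ℤ) ∣ x
      · simp only [hd2, hx, true_and, not_true, false_and, or_false]
        rw [Int.mul_ediv_assoc _ hx]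
        apply f3
        rintro ⟨c, hc⟩
        apply hmx
        obtain ⟨a, rfl⟩ := hx
        rw [Int.mul_ediv_cancel_left _ hpz] at hc
        exact ⟨c, by rw [hc]; push_cast; ring⟩
      · simp only [hd2, hx, false_and, not_false_eq_true, true_and, false_or]
        rw [legendreSym.mul, hs2]
        have hx' : (x : ZMod p) ≠ 0 := by
          rwa [Ne, ZMod.intCast_zmod_eq_zero_iff_dvd]
        rcases legendreSym.eq_one_or_neg_one p hx' with h | h <;> rw [h] <;> norm_num

theorem codeOf (L : ℕ) (hodd : Odd L) (G : Finset ℕ) (hG : ∀ g ∈ G, 1 ≤ g ∧ 2 * g < L)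
    (hd : ∀ g ∈ G, ∀ g' ∈ G, g ≠ g' → ¬ (L : ℤ) ∣ g - 2 * g' ∧ ¬ (L : ℤ) ∣ g + 2 * g') :
    ∃ C : Finset (Finset (ZMod L)),
      IsCAC L 3 C ∧ (∀ I ∈ C, IsEquiDiff I) ∧ C.card = G.card := by
  classical
  let F : ℕ → Finset (ZMod L) := fun g => {0, (g : ZMod L), ((2 * g : ℕ) : ZMod L)}
  have hmem : ∀ g, ∀ d ∈ dstar (F g), ∃ e : ℤ, (e = 1 ∨ e = -1 ∨ e = 2 ∨ e = -2) ∧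
      d = ((e * g : ℤ) : ZMod L) := by
    intro g d hdd
    simp only [dstar, dset, F, mem_sdiff, mem_image, mem_product, mem_insert, mem_singleton,
      Prod.exists] at hdd
    obtain ⟨⟨a, b, ⟨ha, hb⟩, rfl⟩, hne⟩ := hdd
    rcases ha with rfl | rfl | rfl <;> rcases hb with rfl | rfl | rfl
    · simp at hne
    · exact ⟨-1, by simp, by push_cast; ring⟩
    · exact ⟨-2, by simp, by push_cast; ring⟩
    · exact ⟨1, by simp, by push_cast; ring⟩
    · simp at hne
    · exact ⟨-1, by simp, by push_cast; ring⟩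
    · exact ⟨2, by simp, by push_cast; ring⟩
    · exact ⟨1, by simp, by push_cast; ring⟩
    · simp at hne
  have hg0 : ∀ g ∈ G, (g : ZMod L) ≠ 0 := by
    intro g hg h
    rw [ZMod.natCast_eq_zero_iff] at h
    have := hG g hg
    have := Nat.le_of_dvd (by omega) h
    omega
  have hself : ∀ g ∈ G, (g : ZMod L) ∈ dstar (F g) := by
    intro g hg
    simp only [dstar, dset, mem_sdiff, mem_image, mem_product, mem_singleton, Prod.exists]
    exact ⟨⟨g, 0, ⟨by simp [F], by simp [F]⟩, by simp⟩, hg0 g hg⟩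
  have hsmall : ∀ z : ℤ, (L : ℤ) ∣ z → |z| < L → z = 0 := fun z h h' => 
    Int.eq_zero_of_abs_lt_dvd h h'
  have hdis : ∀ g ∈ G, ∀ g' ∈ G, g ≠ g' → Disjoint (dstar (F g)) (dstar (F g')) := by
    intro g hg g' hg' hne
    rw [Finset.disjoint_left]
    intro d h1 h2
    obtain ⟨e, he, rfl⟩ := hmem g d h1
    obtain ⟨e', he', h⟩ := hmem g' _ h2
    rw [eq_comm, ZMod.intCast_eq_intCast_iff_dvd_sub] at h
    have b1 := hG g hg
    have b2 := hG g' hg'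
    have c1 := hd g hg g' hg' hne
    have c2 := hd g' hg' g hg hne.symm
    have hcop : ∀ z : ℤ, (L : ℤ) ∣ 2 * z → (L : ℤ) ∣ z := by
      intro z hz
      refine IsCoprime.dvd_of_dvd_mul_left ?_ hz
      rw [Int.isCoprime_iff_gcd_eq_one]
      exact Nat.Coprime.symm (Nat.coprime_two_left.mpr hodd)
    have s1 : ¬ (L : ℤ) ∣ g - g' := fun h => by
      have := hsmall _ h (by rw [abs_lt]; constructor <;> omega)
      omega
    have s2 : ¬ (L : ℤ) ∣ g + g' := fun h => by
      have := hsmall _ h (by rw [abs_lt]; constructor <;> omega)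
      omega
    have n : ∀ z w : ℤ, (L : ℤ) ∣ z → (w = z ∨ w = -z) → (L : ℤ) ∣ w := by
      rintro z w hz (rfl | rfl)
      · exact hz
      · exact hz.neg_right
    rcases he with rfl | rfl | rfl | rfl <;> rcases he' with rfl | rfl | rfl | rfl <;>
    first
    | (refine s1 (n _ _ h ?_); omega)
    | (refine s2 (n _ _ h ?_); omega)
    | (refine s1 (hcop _ (n _ _ h ?_)); omega)
    | (refine s2 (hcop _ (n _ _ h ?_)); omega)
    | (refine c1.1 (n _ _ h ?_); omega)
    | (refine c1.2 (n _ _ h ?_); omega)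
    | (refine c2.1 (n _ _ h ?_); omega)
    | (refine c2.2 (n _ _ h ?_); omega)
  refine ⟨G.image F, ⟨?_, ?_⟩, ?_, ?_⟩
  · intro I hI
    obtain ⟨g, hg, rfl⟩ := mem_image.mp hI
    have b := hG g hg
    have h1 := hg0 g hg
    have h2 : ((2 * g : ℕ) : ZMod L) ≠ 0 := by
      intro h
      rw [ZMod.natCast_eq_zero_iff] at h
      have := Nat.le_of_dvd (by omega) h
      omega
    rw [Finset.card_eq_three]
    refine ⟨0, g, ((2 * g : ℕ) : ZMod L), h1.symm, h2.symm, ?_, rfl⟩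
    intro h
    apply h1
    push_cast at h
    linear_combination - h
  · intro I hI J hJ hIJ
    obtain ⟨g, hg, rfl⟩ := mem_image.mp hI
    obtain ⟨g', hg', rfl⟩ := mem_image.mp hJ
    exact hdis g hg g' hg' (fun h => hIJ (by rw [h]))
  · intro I hI
    obtain ⟨g, hg, rfl⟩ := mem_image.mp hI
    exact ⟨g, (hG g hg).1, (hG g hg).2.le, rfl⟩
  · apply Finset.card_image_of_injOn
    intro g hg g' hg' h
    by_contra hne
    have h1 := hdis g hg g' hg' hne
    have h2 := hself g hg
    exact Finset.disjoint_left.mp h1 h2 (by have h' : F g = F g' := h; rw [← h']; exact h2)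

theorem upperB (L m : ℕ) (hodd : Odd L) (hLm : L = 3 * m) (C : Finset (Finset (ZMod L)))
    (hC : IsCAC L 3 C) : 4 * C.card ≤ L + 1 := by
  classical
  have hL0 : L ≠ 0 := by rintro rfl; simp at hodd
  haveI : NeZero L := ⟨hL0⟩
  let t : ZMod L := (m : ZMod L)
  have h2 : ∀ a : ZMod L, 2 * a = 0 → a = 0 := by
    intro a ha
    have hu : IsUnit (((2 : ℕ) : ZMod L)) := by
      rw [ZMod.isUnit_iff_coprime]; exact Nat.coprime_two_left.mpr hodd
    push_cast at hu
    exact (hu.mul_right_eq_zero).mp ha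
  have h3 : ∀ a : ZMod L, 3 * a = 0 → a ≠ 0 → a = t ∨ -a = t := by
    intro a ha hne
    have hv : ((a.val : ℕ) : ZMod L) = a := ZMod.natCast_zmod_val a
    have hlt := ZMod.val_lt a
    have hd : L ∣ 3 * a.val := by
      rw [← ZMod.natCast_eq_zero_iff]; push_cast; rw [hv]; exact ha
    have hd' : m ∣ a.val := by
      obtain ⟨c, hc⟩ := hd
      refine ⟨c, ?_⟩
      have e : 3 * a.val = 3 * (m * c) := by
        rw [hc, ← mul_assoc, ← hLm]
      omega
    obtain ⟨k, hk⟩ := hd'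
    have hk3 : k < 3 := by
      by_contra h
      push Not at h
      have : m * 3 ≤ m * k := Nat.mul_le_mul_left m h
      omega
    have hL' : (3 : ZMod L) * m = 0 := by
      have : ((3 * m : ℕ) : ZMod L) = 0 := by rw [← hLm]; simp
      push_cast at this; exact this
    rw [hk] at hv
    interval_cases k
    · simp at hv; exact absurd hv.symm hne
    · left; rw [← hv]; simp [t]
    · right; rw [← hv]; push_cast; simp only [t]; linear_combination -hL'
  have key : ∀ I ∈ C, 4 ≤ (dstar I).card + (if t ∈ dstar I then 2 else 0) := by
    intro I hI
    obtain ⟨x, y, z, hxy, hxz, hyz, rfl⟩ := Finset.card_eq_three.mp (hC.1 I hI)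
    set S := dstar ({x, y, z} : Finset (ZMod L)) with hS
    have hm : ∀ u ∈ ({x, y, z} : Finset (ZMod L)), ∀ v ∈ ({x, y, z} : Finset (ZMod L)),
        u ≠ v → u - v ∈ S := by
      intro u hu v hv huv
      simp only [hS, dstar, dset, mem_sdiff, mem_image, mem_product, Prod.exists]
      exact ⟨⟨u, v, ⟨hu, hv⟩, rfl⟩, by simpa [sub_eq_zero] using huv⟩
    obtain ⟨a, ha⟩ : ∃ a, a = x - y := ⟨_, rfl⟩
    obtain ⟨b, hb⟩ : ∃ b, b = y - z := ⟨_, rfl⟩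
    have a0 : a ≠ 0 := by rw [ha]; exact sub_ne_zero.mpr hxy
    have b0 : b ≠ 0 := by rw [hb]; exact sub_ne_zero.mpr hyz
    have ab0 : a + b ≠ 0 := by
      rw [ha, hb]; simpa [sub_eq_zero] using hxz
    have ma : a ∈ S := ha ▸ hm x (by simp) y (by simp) hxy
    have mb : b ∈ S := hb ▸ hm y (by simp) z (by simp) hyz
    have ma' : -a ∈ S := by 
      have := hm y (by simp) x (by simp) hxy.symm
      rwa [← neg_sub, ← ha] at this
    have mb' : -b ∈ S := by 
      have := hm z (by simp) y (by simp) hyz.symm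
      rwa [← neg_sub, ← hb] at this
    have mc : a + b ∈ S := by
      have := hm x (by simp) z (by simp) hxz
      rw [ha, hb]; simpa using this
    have mc' : -(a + b) ∈ S := by
      have := hm z (by simp) x (by simp) hxz.symm
      rw [ha, hb]; simpa using this
    have neg : ∀ c : ZMod L, c ≠ 0 → c ≠ -c := fun c hc h => hc (h2 c (by linear_combination h))
    have four : ∀ c d : ZMod L, c ∈ S → -c ∈ S → d ∈ S → -d ∈ S → c ≠ 0 → d ≠ 0 → c ≠ d →
        c ≠ -d → 4 ≤ S.card := by
      intro c d h1 h2 h3 h4 hc hd hcd hcd'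
      have hsub : ({c, -c, d, -d} : Finset (ZMod L)) ⊆ S := by
        intro w hw
        simp only [mem_insert, mem_singleton] at hw
        rcases hw with rfl | rfl | rfl | rfl <;> assumption
      have hcard : ({c, -c, d, -d} : Finset (ZMod L)).card = 4 := by
        have e1 := neg c hc
        have e2 := neg d hd
        have e3 : -c ≠ d := fun h => hcd' (by rw [← h]; simp)
        have e4 : -c ≠ -d := fun h => hcd (neg_injective h)
        rw [card_insert_of_notMem (by simp [e1, hcd, hcd']),
          card_insert_of_notMem (by simp only [mem_insert, mem_singleton, not_or]; exact ⟨e3, e4⟩),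
          card_insert_of_notMem (by simpa using e2), card_singleton]
      rw [← hcard]; exact card_le_card hsub
    have hnab : a ≠ -b := fun h => ab0 (by rw [h]; simp)
    by_cases hab : a = b
    · by_cases h : 3 * a = 0
      · have ht : t ∈ S := by
          rcases h3 a h a0 with h | h <;> rw [← h] <;> assumption
        have : ({a, -a} : Finset (ZMod L)) ⊆ S := by
          intro w hw
          simp only [mem_insert, mem_singleton] at hw
          rcases hw with rfl | rfl <;> assumption
        have := card_le_card this
        rw [card_pair (neg a a0)] at this
        rw [if_pos ht]; omega
      · have := four a (a + b) ma ma' mc mc' a0 ab0 (fun h => b0 (by linear_combination -h))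
          (fun h' => h (by rw [← hab] at h'; linear_combination h'))
        omega
    · have := four a b ma ma' mb mb' a0 b0 hab hnab
      omega
  have hsum := Finset.sum_le_sum key
  rw [Finset.sum_add_distrib, Finset.sum_const, ← Finset.card_biUnion 
    (fun I hI J hJ h => hC.2 I hI J hJ h), ← Finset.sum_filter, Finset.sum_const] at hsum
  have c1 : (C.filter (fun I => t ∈ dstar I)).card ≤ 1 := by
    rw [Finset.card_le_one]
    intro I hI J hJ
    rw [mem_filter] at hI hJ
    by_contra h
    exact Finset.disjoint_left.mp (hC.2 I hI.1 J hJ.1 h) hI.2 hJ.2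
  have c2 : (C.biUnion dstar).card ≤ L - 1 := by
    have : C.biUnion dstar ⊆ univ.erase (0 : ZMod L) := by
      intro w hw
      rw [mem_biUnion] at hw
      obtain ⟨I, _, h⟩ := hw
      simp only [dstar, mem_sdiff, mem_singleton] at h
      simp [h.2]
    have := card_le_card this
    rwa [card_erase_of_mem (mem_univ _), card_univ, ZMod.card] at this
  simp only [smul_eq_mul] at hsum
  omega

theorem genSet (L m : ℕ) (hodd : Odd L) (hm0 : m ≠ 0) (hmL : m ∣ L)
    (hp : ∀ p : ℕ, p.Prime → p ∣ m → p % 8 = 5) :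
    ∃ G : Finset ℕ, (∀ g ∈ G, 1 ≤ g ∧ 2 * g < L ∧ ¬ m ∣ g) ∧
      (∀ g ∈ G, ∀ g' ∈ G, ¬ (L : ℤ) ∣ g - 2 * g' ∧ ¬ (L : ℤ) ∣ g + 2 * g') ∧
      2 * G.card + (L / 2) / m = L / 2 := by
  classical
  obtain ⟨f, f1, f2, f3⟩ := exF m hm0 hp
  have hmL' : (m : ℤ) ∣ L := by exact_mod_cast hmL
  have hodd' : L % 2 = 1 := Nat.odd_iff.mp hodd
  have hmodd : Odd m := Odd.of_dvd_nat hodd hmL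
  let N := (Finset.Ioc 0 (L / 2)).filter (fun g => ¬ m ∣ g)
  let T := N.filter (fun g : ℕ => f (g : ℤ))
  let U := N.filter (fun g : ℕ => ¬ f (g : ℤ))
  let s : ℕ → ℕ := fun x => if 2 * x ≤ L / 2 then 2 * x else L - 2 * x
  have hN : ∀ g, g ∈ N ↔ (1 ≤ g ∧ 2 * g < L) ∧ ¬ m ∣ g := by
    intro g
    simp only [N, mem_filter, mem_Ioc]
    constructor
    · rintro ⟨h, h'⟩; exact ⟨by omega, h'⟩
    · rintro ⟨h, h'⟩; exact ⟨by omega, h'⟩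
  have hm2 : ∀ g : ℕ, m ∣ 2 * g → m ∣ g := fun g h => 
    (Nat.Coprime.dvd_of_dvd_mul_left (Nat.coprime_two_right.mpr hmodd) h)
  have hs : ∀ g ∈ N, s g ∈ N ∧ (f (s g) ↔ ¬ f g) := by
    intro g hg
    obtain ⟨hr, hnd⟩ := (hN g).mp hg
    have hnd' : ¬ (m : ℤ) ∣ g := by exact_mod_cast hnd
    by_cases h : 2 * g ≤ L / 2
    · have e : s g = 2 * g := if_pos h
      rw [e]
      refine ⟨(hN _).mpr ⟨by omega, fun h => hnd (hm2 _ h)⟩, ?_⟩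
      push_cast; exact f3 _ hnd'
    · have e : s g = L - 2 * g := if_neg h
      rw [e]
      refine ⟨(hN _).mpr ⟨by omega, fun h => hnd (hm2 _ ?_)⟩, ?_⟩
      · exact (Nat.dvd_sub_iff_right (by omega) hmL).mp h
      · rw [Nat.cast_sub (by omega), ← f3 _ hnd', ← f2 (2 * g)]
        apply f1
        push_cast
        simpa using hmL'
  have hinj : Set.InjOn s N := by
    intro x hx y hy hxy
    obtain ⟨hr, -⟩ := (hN x).mp hx
    obtain ⟨hr', -⟩ := (hN y).mp hy
    simp only [s] at hxy
    split_ifs at hxy <;> omega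
  have hTU : T.card = U.card := by
    apply le_antisymm
    · apply Finset.card_le_card_of_injOn s
      · intro x hx
        have hx' := mem_filter.mp hx
        have := hs x hx'.1
        exact mem_filter.mpr ⟨this.1, fun h => this.2.mp h hx'.2⟩
      · exact hinj.mono (by intro x hx; exact (mem_filter.mp hx).1)
    · apply Finset.card_le_card_of_injOn s
      · intro x hx
        have hx' := mem_filter.mp hx
        have := hs x hx'.1
        exact mem_filter.mpr ⟨this.1, this.2.mpr hx'.2⟩
      · exact hinj.mono (by intro x hx; exact (mem_filter.mp hx).1)
  have hc1 : T.card + U.card = N.card := Finset.card_filter_add_card_filter_not _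
  have hc2 : ((Finset.Ioc 0 (L / 2)).filter (fun g => m ∣ g)).card + N.card = L / 2 := by
    have := Finset.card_filter_add_card_filter_not (s := Finset.Ioc 0 (L / 2)) (fun g => m ∣ g)
    rw [this]; simp
  rw [Nat.Ioc_filter_dvd_card_eq_div] at hc2
  refine ⟨T, ?_, ?_, by omega⟩
  · intro g hg
    have := (hN g).mp (mem_filter.mp hg).1
    exact ⟨this.1.1, this.1.2, this.2⟩
  · intro g hg g' hg'
    obtain ⟨a, b⟩ := mem_filter.mp hg
    obtain ⟨a', b'⟩ := mem_filter.mp hg'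
    have hnd' : ¬ (m : ℤ) ∣ g' := by exact_mod_cast ((hN _).mp a').2
    have h3 := f3 _ hnd'
    constructor
    · intro h
      have := f1 _ _ (hmL'.trans h)
      tauto
    · intro h
      have := f1 g (-(2 * g')) (by rw [sub_neg_eq_add]; exact hmL'.trans h)
      rw [f2] at this
      tauto

theorem finish (L m n : ℕ) (hodd : Odd L) (hLm : L = 3 * m) (hn : (L + 1) / 4 = n)
    (h : ∃ C : Finset (Finset (ZMod L)), IsCAC L 3 C ∧ (∀ I ∈ C, IsEquiDiff I) ∧ C.card = n) :
    MCAC L 3 = n ∧ MeCAC L 3 = n := by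
  have ub := upperB L m hodd hLm
  obtain ⟨C, h1, h2, h3⟩ := h
  constructor
  · apply IsGreatest.csSup_eq
    refine ⟨⟨C, h1, h3⟩, ?_⟩
    rintro k ⟨D, hD, rfl⟩
    have := ub D hD
    omega
  · apply IsGreatest.csSup_eq
    refine ⟨⟨C, h1, h2, h3⟩, ?_⟩
    rintro k ⟨D, hD, -, rfl⟩
    have := ub D hD
    omega

theorem build (L m : ℕ) (hodd : Odd L) (hm0 : m ≠ 0) (hmL : m ∣ L)
    (hp : ∀ p : ℕ, p.Prime → p ∣ m → p % 8 = 5) (K : Finset ℕ)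
    (hK : ∀ k ∈ K, m ∣ k ∧ 1 ≤ k ∧ 2 * k < L)
    (hK2 : ∀ g ∈ K, ∀ g' ∈ K, g ≠ g' → ¬ (L : ℤ) ∣ g - 2 * g' ∧ ¬ (L : ℤ) ∣ g + 2 * g') 
    (n : ℕ) (hn : 2 * n + (L / 2) / m = L / 2 + 2 * K.card) :
    ∃ C : Finset (Finset (ZMod L)), IsCAC L 3 C ∧ (∀ I ∈ C, IsEquiDiff I) ∧ C.card = n := by
  classical
  obtain ⟨G, g1, g2, g3⟩ := genSet L m hodd hm0 hmL hp
  have hmL' : (m : ℤ) ∣ L := by exact_mod_cast hmL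
  have hmodd : Odd m := Odd.of_dvd_nat hodd hmL
  have hm2 : ∀ g : ℕ, (m : ℤ) ∣ 2 * g → m ∣ g := fun g h => 
    (Nat.Coprime.dvd_of_dvd_mul_left (Nat.coprime_two_right.mpr hmodd) (by exact_mod_cast h))
  have hdis : Disjoint G K := by
    rw [Finset.disjoint_left]
    intro g h h'
    exact (g1 g h).2.2 (hK g h').1
  have hc : (G ∪ K).card = n := by
    rw [card_union_of_disjoint hdis]; omega
  rw [← hc]
  apply codeOf L hodd
  · intro g hg
    rcases mem_union.mp hg with h | h
    · exact ⟨(g1 g h).1, (g1 g h).2.1⟩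
    · exact (hK g h).2
  · intro g hg g' hg' hne
    rcases mem_union.mp hg with h | h <;> rcases mem_union.mp hg' with h' | h'
    · exact g2 g h g' h'
    · have a := (g1 g h).2.2
      have b : (m : ℤ) ∣ 2 * g' := (Int.natCast_dvd_natCast.mpr (hK g' h').1).mul_left 2
      constructor
      · intro hh
        exact a (Int.natCast_dvd_natCast.mp ((dvd_sub_left b).mp (hmL'.trans hh)))
      · intro hh
        exact a (Int.natCast_dvd_natCast.mp ((dvd_add_left b).mp (hmL'.trans hh)))
    · have a := (g1 g' h').2.2
      have b : (m : ℤ) ∣ g := Int.natCast_dvd_natCast.mpr (hK g h).1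
      constructor
      · intro hh
        exact a (hm2 _ ((dvd_sub_right b).mp (hmL'.trans hh)))
      · intro hh
        exact a (hm2 _ ((dvd_add_right b).mp (hmL'.trans hh)))
    · exact hK2 g h g' h' hne

theorem mod4 (m : ℕ) : (∀ p : ℕ, p.Prime → p ∣ m → p % 8 = 5) → m ≠ 0 → m % 4 = 1 := by
  induction m using induction_on_primes with
  | zero => simp
  | one => simp
  | prime_mul p m hpp ih =>
    intro h h0
    have h1 := ih (fun q hq hqm => h q hq (hqm.mul_left p)) (by rintro rfl; simp at h0)
    have h2 := h p hpp (dvd_mul_right p m)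
    rw [Nat.mul_mod, h1, show p % 4 = 1 by omega]

theorem MCAC_div_3 (L : ℕ) (hL : 3 < L) (hodd : Odd L) (h3 : 3 ∣ L)
    (hp : ∀ p : ℕ, p.Prime → p ∣ L → p ≠ 3 → p % 8 = 5) :
    (¬ 9 ∣ L → MCAC L 3 = (L + 1) / 4 ∧ MeCAC L 3 = (L + 1) / 4) ∧
    (9 ∣ L → ¬ 27 ∣ L → MCAC L 3 = (L - 1) / 4 ∧ MeCAC L 3 = (L - 1) / 4) := by
  constructor
  · intro h9
    obtain ⟨m, hm⟩ := h3
    have hm3 : ¬ 3 ∣ m := fun h => h9 (by omega)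
    have hm0 : m ≠ 0 := by omega
    have hp' : ∀ p : ℕ, p.Prime → p ∣ m → p % 8 = 5 := fun p h h' =>
      hp p h (hm ▸ h'.mul_left 3) (by rintro rfl; exact hm3 h')
    have h4 := mod4 m hp' hm0
    have hdiv : (L / 2) / m = 1 := by
      rw [Nat.div_eq_iff (by omega)]; omega
    refine finish L m _ hodd hm rfl (build L m hodd hm0 ⟨3, by omega⟩ hp' {m} ?_ ?_ _ ?_)
    · intro k hk
      rw [mem_singleton] at hk; subst hk
      exact ⟨dvd_rfl, by omega⟩
    · intro g hg g' hg' hne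
      rw [mem_singleton] at hg hg'
      omega
    · rw [hdiv, card_singleton]; omega
  · intro h9 h27
    obtain ⟨m, hm⟩ := h9
    have hm3 : ¬ 3 ∣ m := fun h => h27 (by omega)
    have hm0 : m ≠ 0 := by omega
    have hp' : ∀ p : ℕ, p.Prime → p ∣ m → p % 8 = 5 := fun p h h' =>
      hp p h (hm ▸ h'.mul_left 9) (by rintro rfl; exact hm3 h')
    have h4 := mod4 m hp' hm0
    have hdiv : (L / 2) / m = 4 := by
      rw [Nat.div_eq_iff (by omega)]; omega
    have hmz : (m : ℤ) ≠ 0 := by exact_mod_cast hm0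
    have nd : ∀ c : ℤ, ¬ (9 : ℤ) ∣ c → ¬ (L : ℤ) ∣ m * c := by
      intro c hc h
      apply hc
      rw [hm] at h
      push_cast at h
      rw [mul_comm] at h
      exact Int.dvd_of_mul_dvd_mul_left hmz h
    refine finish L (3 * m) _ hodd (by omega) (by omega)
      (build L m hodd hm0 ⟨9, by omega⟩ hp' {m, 3 * m} ?_ ?_ _ ?_)
    · intro k hk
      rw [mem_insert, mem_singleton] at hk
      rcases hk with rfl | rfl
      · exact ⟨dvd_rfl, by omega⟩
      · exact ⟨dvd_mul_left _ _, by omega⟩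
    · intro g hg g' hg' hne
      rw [mem_insert, mem_singleton] at hg hg'
      rcases hg with rfl | rfl <;> rcases hg' with rfl | rfl
      · exact absurd rfl hne
      · constructor
        · intro h; exact nd (-5) (by norm_num) (by convert h using 1; push_cast; ring)
        · intro h; exact nd 7 (by norm_num) (by convert h using 1; push_cast; ring)
      · constructor
        · intro h; exact nd 1 (by norm_num) (by convert h using 1; push_cast; ring)
        · intro h; exact nd 5 (by norm_num) (by convert h using 1; push_cast; ring)
      · exact absurd rfl hne
    · rw [hdiv, card_pair (by omega)]; omega
end

section
/- Let L be an odd integer divisible by 3 but not by 9. Suppose L has a prime factor p̂ such that p̂ is a safe prime with p̂ ≡ 7 (mod 8), p̂² does not divide L, and every prime factor of L other than 3 and p̂ is congruent to 5 modulo 8. Then M(L,3) = M^e(L,3) = (L − 1)/4. -/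
open Finset

section aux

lemma aux_mod4 (n : ℕ) (hn : n ≠ 0) (h : ∀ p : ℕ, p.Prime → p ∣ n → p % 4 = 1) : n % 4 = 1 := by
  induction n using Nat.recOnMul with
  | zero => exact absurd rfl hn
  | one => rfl
  | prime p hp => exact h p hp dvd_rfl
  | mul a b iha ihb =>
    have ha : a ≠ 0 := by rintro rfl; simp at hn
    have hb : b ≠ 0 := by rintro rfl; simp at hn
    have h1 := iha ha (fun p hp hd => h p hp (hd.mul_right _))
    have h2 := ihb hb (fun p hp hd => h p hp (hd.mul_left _))
    rw [Nat.mul_mod, h1, h2]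

lemma aux_Lmod4 (L phat : ℕ) (hodd : Odd L) (h3 : 3 ∣ L) (h9 : ¬ 9 ∣ L)
    (hphat : phat.Prime) (hdvd : phat ∣ L)
    (hmod : phat % 8 = 7) (hsq : ¬ phat ^ 2 ∣ L)
    (hp : ∀ p : ℕ, p.Prime → p ∣ L → p ≠ 3 → p ≠ phat → p % 8 = 5) : L % 4 = 1 := by
  have hc : Nat.Coprime 3 phat := by
    rw [Nat.coprime_primes Nat.prime_three hphat]; rintro rfl; omega
  obtain ⟨m, rfl⟩ := hc.mul_dvd_of_dvd_of_dvd h3 hdvd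
  have hm : m % 4 = 1 := by
    apply aux_mod4
    · rintro rfl; simp at h9
    · intro p hpp hpm
      have := hp p hpp (hpm.mul_left _) (by
        rintro rfl
        obtain ⟨k, rfl⟩ := hpm
        exact h9 ⟨phat * k, by ring⟩) (by
        rintro rfl
        obtain ⟨k, rfl⟩ := hpm
        exact hsq ⟨3 * k, by ring⟩)
      omega
  have : phat % 4 = 3 := by omega
  rw [Nat.mul_mod, Nat.mul_mod 3, this, hm]

lemma aux_div (L phat : ℕ) (h9 : ¬ 9 ∣ L)
    (hphat : phat.Prime) 
    (hmod : phat % 8 = 7) (hsq : ¬ phat ^ 2 ∣ L)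
    (hp : ∀ p : ℕ, p.Prime → p ∣ L → p ≠ 3 → p ≠ phat → p % 8 = 5)
    (d : ℕ) (hd0 : d ≠ 0) (hd : d ∣ L) (d1 : d ≠ 1) (d3 : d ≠ 3) (dp : d ≠ phat) :
    ∃ m, m ∣ d ∧ m % 8 = 5 := by
  by_cases hex : ∃ p : ℕ, p.Prime ∧ p ∣ d ∧ p ≠ 3 ∧ p ≠ phat
  · obtain ⟨p, h1, h2, h3, h4⟩ := hex
    exact ⟨p, h2, hp p h1 (h2.trans hd) h3 h4⟩
  push Not at hex
  have hc : Nat.Coprime 3 phat := by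
    rw [Nat.coprime_primes Nat.prime_three hphat]; rintro rfl; omega
  by_cases a3 : 3 ∣ d
  · by_cases ap : phat ∣ d
    · exact ⟨3 * phat, hc.mul_dvd_of_dvd_of_dvd a3 ap, by omega⟩
    · exfalso
      have := Nat.eq_prime_pow_of_unique_prime_dvd hd0 (p := 3) (fun {q} hq hqd => by
        by_contra hne
        have := hex q hq hqd hne
        subst this; exact ap hqd)
      generalize d.primeFactorsList.length = k at this
      subst this
      rcases k with _ | _ | k
      · simp at d1
      · simp at d3
      · exact h9 (Dvd.dvd.trans ⟨3 ^ k, by ring⟩ hd)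
  · exfalso
    have := Nat.eq_prime_pow_of_unique_prime_dvd hd0 (p := phat) (fun {q} hq hqd => by
        apply hex q hq hqd
        rintro rfl; exact a3 hqd)
    generalize d.primeFactorsList.length = k at this
    subst this
    rcases k with _ | _ | k
    · simp at d1
    · simp at dp
    · exact hsq (Dvd.dvd.trans ⟨phat ^ k, by ring⟩ hd)

lemma aux_two {L : ℕ} (hodd : Odd L) (x : ZMod L) (h : 2 * x = 0) : x = 0 := by
  have h2 : IsUnit ((2 : ℕ) : ZMod L) := by
    rw [ZMod.isUnit_iff_coprime]; exact hodd.coprime_two_left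
  push_cast at h2
  exact (h2.mul_right_eq_zero).1 h

lemma aux_three {k : ℕ} [NeZero (3 * k)] (x : ZMod (3 * k)) (h : 3 * x = 0) (hx : x ≠ 0) :
    x = (k : ZMod (3 * k)) ∨ -x = (k : ZMod (3 * k)) := by
  have hv : x = (x.val : ZMod (3*k)) := (ZMod.natCast_zmod_val x).symm
  have hlt := ZMod.val_lt x
  have h0 : x.val ≠ 0 := by rwa [Ne, ZMod.val_eq_zero]
  generalize x.val = v at *
  subst hv
  have : (3 * k) ∣ 3 * v := by
    rw [← ZMod.natCast_eq_zero_iff]; push_cast; exact h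
  obtain ⟨c, hc⟩ := Nat.dvd_of_mul_dvd_mul_left (by norm_num) this
  have hk : 0 < k := by
    rcases Nat.eq_zero_or_pos k with rfl | h
    · simp at hlt
    · exact h
  have hc3 : c < 3 := by
    subst hc
    by_contra hcc
    push Not at hcc
    nlinarith
  have h3 : ((3 : ZMod (3*k)) * k) = 0 := by
    have := ZMod.natCast_self (3*k); push_cast at this; exact this
  interval_cases c
  · simp at hc; exact absurd hc h0
  · left; rw [hc]; simp
  · right; rw [hc]; push_cast; linear_combination -h3

lemma mem_dstar {L : ℕ} (I : Finset (ZMod L)) (x : ZMod L) :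
    x ∈ dstar I ↔ (∃ a ∈ I, ∃ b ∈ I, a - b = x) ∧ x ≠ 0 := by
  simp only [dstar, dset, Finset.mem_sdiff, Finset.mem_image, Finset.mem_product,
    Finset.mem_singleton, Prod.exists]
  constructor
  · rintro ⟨⟨a, b, ⟨ha, hb⟩, h⟩, h0⟩; exact ⟨⟨a, ha, b, hb, h⟩, h0⟩
  · rintro ⟨⟨a, ha, b, hb, h⟩, h0⟩; exact ⟨⟨a, b, ⟨ha, hb⟩, h⟩, h0⟩

lemma aux_word {k : ℕ} [NeZero (3 * k)] (hodd : Odd (3 * k)) (I : Finset (ZMod (3 * k)))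
    (hI : I.card = 3) :
    4 ≤ (dstar I).card + (if (k : ZMod (3*k)) ∈ dstar I then 2 else 0) := by
  classical
  obtain ⟨a, b, c, hab, hac, hbc, rfl⟩ := Finset.card_eq_three.1 hI
  have key : ∀ u v : ZMod (3*k), u ∈ dstar {a,b,c} → -u ∈ dstar {a,b,c} → v ∈ dstar {a,b,c} →
      -v ∈ dstar {a,b,c} → v ≠ u → v ≠ -u → 4 ≤ (dstar {a,b,c}).card := by
    intro u v h1 h2 h3 h4 h5 h6
    have hu : u ≠ 0 := ((mem_dstar _ _).1 h1).2
    have hv : v ≠ 0 := ((mem_dstar _ _).1 h3).2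
    have hu2 : u ≠ -u := fun h => hu (aux_two hodd u (by linear_combination h))
    have hv2 : v ≠ -v := fun h => hv (aux_two hodd v (by linear_combination h))
    have : ({u, -u, v, -v} : Finset (ZMod (3*k))).card = 4 := by
      have h7 : -u ≠ v := fun h => h6 h.symm
      have h8 : u ≠ -v := fun h => h6 (by rw [h]; ring)
      have h9 : -u ≠ -v := fun h => h5 (neg_injective h).symm
      rw [Finset.card_insert_of_notMem, Finset.card_insert_of_notMem, Finset.card_insert_of_notMem,
        Finset.card_singleton]
      · simpa using hv2
      · simp only [Finset.mem_insert, Finset.mem_singleton, not_or]; exact ⟨h7, h9⟩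
      · simp only [Finset.mem_insert, Finset.mem_singleton, not_or]; exact ⟨hu2, h5.symm, h8⟩
    rw [← this]
    apply Finset.card_le_card
    intro y hy
    simp only [Finset.mem_insert, Finset.mem_singleton] at hy
    rcases hy with rfl | rfl | rfl | rfl <;> assumption
  have ne1 : a - b ≠ 0 := sub_ne_zero.2 hab
  have ne2 : b - c ≠ 0 := sub_ne_zero.2 hbc
  have ne3 : a - c ≠ 0 := sub_ne_zero.2 hac
  have hu : a - b ∈ dstar {a,b,c} := (mem_dstar _ _).2 ⟨⟨a, by simp, b, by simp, rfl⟩, ne1⟩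
  have hu' : -(a - b) ∈ dstar {a,b,c} :=
    (mem_dstar _ _).2 ⟨⟨b, by simp, a, by simp, by ring⟩, neg_ne_zero.2 ne1⟩
  have hv : b - c ∈ dstar {a,b,c} := (mem_dstar _ _).2 ⟨⟨b, by simp, c, by simp, rfl⟩, ne2⟩
  have hv' : -(b - c) ∈ dstar {a,b,c} :=
    (mem_dstar _ _).2 ⟨⟨c, by simp, b, by simp, by ring⟩, neg_ne_zero.2 ne2⟩
  have hw : a - c ∈ dstar {a,b,c} := (mem_dstar _ _).2 ⟨⟨a, by simp, c, by simp, rfl⟩, ne3⟩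
  have hw' : -(a - c) ∈ dstar {a,b,c} :=
    (mem_dstar _ _).2 ⟨⟨c, by simp, a, by simp, by ring⟩, neg_ne_zero.2 ne3⟩
  have e2 : b - c ≠ -(a - b) := fun h => ne3 (by linear_combination h)
  by_cases e1 : b - c = a - b
  swap
  · have := key _ _ hu hu' hv hv' e1 e2; omega
  have f1 : a - c ≠ a - b := fun h => ne2 (by linear_combination h)
  by_cases f2 : a - c = -(a - b)
  swap
  · have := key _ _ hu hu' hw hw' f1 f2; omega
  have h3 : 3 * (a - b) = 0 := by linear_combination f2 - e1
  have hk : (k : ZMod (3*k)) ∈ dstar {a,b,c} := by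
    rcases aux_three _ h3 ne1 with h | h
    · rw [← h]; exact hu
    · rw [← h]; exact hu'
  rw [if_pos hk]
  have : 1 < (dstar {a,b,c}).card :=
    Finset.one_lt_card.2 ⟨_, hu, _, hu', fun h => ne1 (aux_two hodd _ (by linear_combination h))⟩
  omega

lemma aux_upper {k : ℕ} [NeZero (3 * k)] (hodd : Odd (3 * k)) (h4 : (3 * k) % 4 = 1)
    (C : Finset (Finset (ZMod (3 * k)))) (hC : IsCAC (3 * k) 3 C) : C.card ≤ (3 * k - 1) / 4 := by
  classical
  have h1 : ∑ I ∈ C, 4 ≤ ∑ I ∈ C, ((dstar I).card + (if (k : ZMod (3*k)) ∈ dstar I then 2 else 0)) :=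
    Finset.sum_le_sum fun I hI => aux_word hodd I (hC.1 I hI)
  have h2 : ∑ I ∈ C, (dstar I).card ≤ 3 * k - 1 := by
    rw [← Finset.card_biUnion (fun I hI J hJ h => hC.2 I hI J hJ h)]
    calc _ ≤ ((Finset.univ : Finset (ZMod (3*k))).erase 0).card := by
          apply Finset.card_le_card
          intro x hx
          obtain ⟨I, hI, hx⟩ := Finset.mem_biUnion.1 hx
          simpa using ((mem_dstar _ _).1 hx).2
      _ = _ := by
          rw [Finset.card_erase_of_mem (Finset.mem_univ _), Finset.card_univ, ZMod.card]
  have h3 : ∑ I ∈ C, (if (k : ZMod (3*k)) ∈ dstar I then 2 else 0) ≤ 2 := by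
    rw [← Finset.sum_filter, Finset.sum_const, smul_eq_mul]
    have : (C.filter (fun I => (k : ZMod (3*k)) ∈ dstar I)).card ≤ 1 := by
      rw [Finset.card_le_one]
      intro I hI J hJ
      rw [Finset.mem_filter] at hI hJ
      by_contra hne
      exact Finset.disjoint_left.1 (hC.2 I hI.1 J hJ.1 hne) hI.2 hJ.2
    omega
  rw [Finset.sum_add_distrib, Finset.sum_const, smul_eq_mul] at h1
  omega

lemma aux_word_dstar {L : ℕ} (g : ZMod L) (x : ZMod L) (hx : x ∈ dstar {0, g, 2 * g}) :
    x = g ∨ x = -g ∨ x = 2 * g ∨ x = - (2 * g) := by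
  obtain ⟨⟨a, ha, b, hb, h⟩, h0⟩ := (mem_dstar _ _).1 hx
  simp only [Finset.mem_insert, Finset.mem_singleton] at ha hb
  subst h
  rcases ha with rfl | rfl | rfl <;> rcases hb with rfl | rfl | rfl <;> ring_nf at h0 ⊢ <;> simp at h0 ⊢

lemma aux_construct {L : ℕ} [NeZero L] (hodd : Odd L) (S : Finset (ZMod L)) (h0 : (0 : ZMod L) ∉ S)
    (hneg : ∀ x ∈ S, -x ∈ S) (hd : ∀ x ∈ S, 2 * x ∈ S → 2 * x = -x) :
    ∃ C : Finset (Finset (ZMod L)), IsCAC L 3 C ∧ (∀ I ∈ C, IsEquiDiff I) ∧ S.card ≤ 2 * C.card := by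
  classical
  set G := (Finset.Icc 1 ((L-1)/2)).filter (fun g : ℕ => (g : ZMod L) ∈ S) with hG
  set W : ℕ → Finset (ZMod L) := fun g => {0, (g : ZMod L), 2 * (g : ZMod L)} with hW
  have hne : ∀ g ∈ G, (g : ZMod L) ≠ 0 := by
    intro g hg h
    rw [hG, Finset.mem_filter] at hg
    exact h0 (h ▸ hg.2)
  have hne2 : ∀ g ∈ G, 2 * (g : ZMod L) ≠ 0 := fun g hg h => hne g hg (aux_two hodd _ h)
  -- distinct generators are not equal up to sign
  have hpm : ∀ g ∈ G, ∀ h ∈ G, g ≠ h → (g : ZMod L) ≠ h ∧ (g : ZMod L) ≠ -h := by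
    intro g hg h hh hgh
    rw [hG, Finset.mem_filter, Finset.mem_Icc] at hg hh
    constructor
    · intro e
      rw [ZMod.natCast_eq_natCast_iff'] at e
      rw [Nat.mod_eq_of_lt (by omega), Nat.mod_eq_of_lt (by omega)] at e
      exact hgh e
    · intro e
      have : ((g + h : ℕ) : ZMod L) = 0 := by push_cast; rw [e]; ring
      rw [ZMod.natCast_eq_zero_iff] at this
      have := Nat.le_of_dvd (by omega) this
      omega
  have hdisj : ∀ g ∈ G, ∀ h ∈ G, g ≠ h → Disjoint (dstar (W g)) (dstar (W h)) := by
    intro g hg h hh hgh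
    rw [Finset.disjoint_left]
    intro x hx hy
    have hgS : (g : ZMod L) ∈ S := (Finset.mem_filter.1 hg).2
    have hhS : (h : ZMod L) ∈ S := (Finset.mem_filter.1 hh).2
    obtain ⟨n1, n2⟩ := hpm g hg h hh hgh
    have c1 : ∀ u v : ZMod L, u ∈ S → v ∈ S → u ≠ v → u ≠ -v → u ≠ 2 * v := by
      intro u v hu hv a b e
      have := hd v hv (e ▸ hu)
      exact b (e.trans this)
    have d1 := c1 _ _ hgS hhS n1 n2
    have d2 := c1 _ _ hhS hgS n1.symm (fun e => n2 (by rw [e]; ring))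
    have d3 := c1 _ _ (hneg _ hgS) hhS (fun e => n2 (by rw [← e]; ring)) (fun e => n1 (neg_injective e))
    have d4 := c1 _ _ (hneg _ hhS) hgS (fun e => n2 (by rw [← e])) (fun e => n1 (neg_injective e).symm)
    have t1 : ∀ u v : ZMod L, 2 * u = 2 * v → u = v := fun u v e =>
      sub_eq_zero.1 (aux_two hodd _ (by linear_combination e))
    have d5 : 2 * (g : ZMod L) ≠ 2 * h := fun e => n1 (t1 _ _ e)
    have d6 : 2 * (g : ZMod L) ≠ -(2 * h) := fun e => n2 (t1 _ _ (by linear_combination e))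
    rcases aux_word_dstar _ _ hx with e | e | e | e <;> rcases aux_word_dstar _ _ hy with f | f | f | f
    all_goals (rw [e] at f)
    · exact n1 f
    · exact n2 f
    · exact d1 f
    · exact d3 (by rw [f]; ring)
    · exact n2 (by rw [← f]; ring)
    · exact n1 (neg_injective f)
    · exact d3 f
    · exact d1 (neg_injective f)
    · exact d2 f.symm
    · exact d4 f.symm
    · exact d5 f
    · exact d6 f
    · exact d4 (by rw [← f]; ring)
    · exact d2 (neg_injective f).symm
    · exact d6 (by rw [← f]; ring)
    · exact d5 (neg_injective f)
  have hmemd : ∀ g ∈ G, (g : ZMod L) ∈ dstar (W g) := fun g hg =>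
    (mem_dstar _ _).2 ⟨⟨(g : ZMod L), by simp [hW], 0, by simp [hW], by ring⟩, hne g hg⟩
  have hinj : Set.InjOn W (G : Set ℕ) := by
    intro g hg h hh e
    by_contra hgh
    have := hdisj g hg h hh hgh
    rw [← e] at this
    exact Finset.disjoint_left.1 this (hmemd g hg) (hmemd g hg)
  refine ⟨G.image W, ⟨?_, ?_⟩, ?_, ?_⟩
  · intro I hI
    obtain ⟨g, hg, rfl⟩ := Finset.mem_image.1 hI
    apply Finset.card_eq_three.2
    refine ⟨0, _, _, (hne g hg).symm, (hne2 g hg).symm, fun e => hne g hg (by linear_combination -e), rfl⟩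
  · intro I hI J hJ hIJ
    obtain ⟨g, hg, rfl⟩ := Finset.mem_image.1 hI
    obtain ⟨h, hh, rfl⟩ := Finset.mem_image.1 hJ
    exact hdisj g hg h hh (fun e => hIJ (e ▸ rfl))
  · intro I hI
    obtain ⟨g, hg, rfl⟩ := Finset.mem_image.1 hI
    have := Finset.mem_Icc.1 (Finset.mem_filter.1 hg).1
    exact ⟨g, this.1, by omega, by simp [hW]⟩
  · rw [Finset.card_image_of_injOn hinj]
    have hsub : S ⊆ G.image (fun g : ℕ => (g : ZMod L)) ∪ G.image (fun g : ℕ => -(g : ZMod L)) := by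
      intro x hx
      have hx0 : x ≠ 0 := fun e => h0 (e ▸ hx)
      have hv : x = (x.val : ZMod L) := (ZMod.natCast_zmod_val x).symm
      have hlt := ZMod.val_lt x
      have hv0 : x.val ≠ 0 := by rwa [Ne, ZMod.val_eq_zero]
      obtain ⟨r, hr⟩ := hodd
      by_cases hle : x.val ≤ (L-1)/2
      · apply Finset.mem_union_left
        refine Finset.mem_image.2 ⟨x.val, Finset.mem_filter.2 ⟨Finset.mem_Icc.2 ⟨by omega, hle⟩, ?_⟩, hv.symm⟩
        rwa [← hv]
      · apply Finset.mem_union_right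
        have e : ((L - x.val : ℕ) : ZMod L) = -x := by
          rw [Nat.cast_sub hlt.le, ← hv]; simp
        refine Finset.mem_image.2 ⟨L - x.val, Finset.mem_filter.2 ⟨Finset.mem_Icc.2 ⟨by omega, by omega⟩, ?_⟩, ?_⟩
        · rw [e]; exact hneg x hx
        · rw [e]; ring
    calc S.card ≤ _ := Finset.card_le_card hsub
      _ ≤ _ := Finset.card_union_le _ _
      _ ≤ G.card + G.card := Nat.add_le_add Finset.card_image_le Finset.card_image_le
      _ = _ := by ring

/-- the colouring -/
lemma aux_color (L phat : ℕ) [NeZero L] (hodd : Odd L) (h9 : ¬ 9 ∣ L)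
    (hphat : phat.Prime) 
    (hmod : phat % 8 = 7) (hsq : ¬ phat ^ 2 ∣ L)
    (hp : ∀ p : ℕ, p.Prime → p ∣ L → p ≠ 3 → p ≠ phat → p % 8 = 5) :
    ∃ c : ZMod L → ℤ, ∀ x : ZMod L, 3 * x ≠ 0 → (phat : ZMod L) * x ≠ 0 →
      (c x = 1 ∨ c x = -1) ∧ c (-x) = c x ∧ c (2 * x) = - c x := by
  classical
  have hL0 : 0 < L := Nat.pos_of_ne_zero (NeZero.ne L)
  have hm : ∀ g : ℕ, ∃ m : ℕ, g ∣ L → L / g ≠ 1 → L / g ≠ 3 → L / g ≠ phat →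
      m ∣ L / g ∧ m % 8 = 5 := by
    intro g
    by_cases h : g ∣ L ∧ L / g ≠ 1 ∧ L / g ≠ 3 ∧ L / g ≠ phat
    · obtain ⟨h1, h2, h3, h4⟩ := h
      obtain ⟨m, hm⟩ := aux_div L phat h9 hphat hmod hsq hp (L / g)
        (Nat.div_pos (Nat.le_of_dvd hL0 h1) (Nat.pos_of_dvd_of_pos h1 hL0)).ne'
        (Nat.div_dvd_of_dvd h1) h2 h3 h4
      exact ⟨m, fun _ _ _ _ => hm⟩
    · exact ⟨0, fun h1 h2 h3 h4 => absurd ⟨h1, h2, h3, h4⟩ h⟩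
  choose f hf using hm
  set c : ZMod L → ℤ := fun x =>
    jacobiSym ((x.val / Nat.gcd x.val L : ℕ) : ℤ) (f (Nat.gcd x.val L)) with hc
  refine ⟨c, fun x h3 hph => ?_⟩
  have hgL : Nat.gcd x.val L ∣ L := Nat.gcd_dvd_right _ _
  have hgx : Nat.gcd x.val L ∣ x.val := Nat.gcd_dvd_left _ _
  have hgpos : 0 < Nat.gcd x.val L := Nat.gcd_pos_of_pos_right _ hL0
  have hkill : ((L / Nat.gcd x.val L : ℕ) : ZMod L) * x = 0 := by
    have : ((L / Nat.gcd x.val L * x.val : ℕ) : ZMod L) = 0 := by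
      rw [ZMod.natCast_eq_zero_iff]
      refine ⟨x.val / Nat.gcd x.val L, ?_⟩
      rw [← Nat.mul_div_assoc _ hgx, mul_comm, ← Nat.mul_div_assoc _ hgL, mul_comm]
    rwa [Nat.cast_mul, ZMod.natCast_zmod_val] at this
  obtain ⟨hmd, hm8⟩ := hf (Nat.gcd x.val L) hgL
    (fun e => h3 (by rw [e] at hkill; simp at hkill; rw [hkill]; simp))
    (fun e => h3 (by rw [e] at hkill; exact_mod_cast hkill))
    (fun e => hph (by rw [e] at hkill; exact hkill))
  have hmodd : Odd (f (Nat.gcd x.val L)) := by rw [Nat.odd_iff]; omega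
  -- scaling
  have hscale : ∀ (y : ZMod L) (u : ℤ), y = (u : ZMod L) * x → IsCoprime u (L : ℤ) →
      c y = jacobiSym u (f (Nat.gcd x.val L)) * c x := by
    intro y u hy hu
    have hcong : (y.val : ℤ) ≡ u * x.val [ZMOD L] := by
      rw [← ZMod.intCast_eq_intCast_iff]
      push_cast
      rw [ZMod.natCast_zmod_val, ZMod.natCast_zmod_val, hy]
    have hg : Nat.gcd y.val L = Nat.gcd x.val L := by
      have e1 : Int.gcd (y.val : ℤ) L = Int.gcd (u * x.val) L := by
        rw [← Int.gcd_emod, hcong, Int.gcd_emod]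
      have e2 : Int.gcd (u * x.val) L = Int.gcd (x.val : ℤ) L :=
        Int.gcd_mul_right_left_of_gcd_eq_one (Int.isCoprime_iff_gcd_eq_one.1 hu)
      have := e1.trans e2
      rwa [Int.gcd_natCast_natCast, Int.gcd_natCast_natCast] at this
    simp only [hc]
    rw [hg, ← jacobiSym.mul_left]
    apply jacobiSym.mod_left'
    change _ ≡ _ [ZMOD _]
    have hgy : Nat.gcd x.val L ∣ y.val := hg ▸ Nat.gcd_dvd_left y.val L
    generalize Nat.gcd x.val L = g at *
    refine Int.ModEq.of_dvd (Int.natCast_dvd_natCast.2 hmd) ?_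
    obtain ⟨d, hd⟩ := hgL
    obtain ⟨a, ha⟩ := hgx
    obtain ⟨b, hb⟩ := hgy
    rw [ha, hb, hd] at hcong ⊢
    rw [Nat.mul_div_cancel_left _ hgpos, Nat.mul_div_cancel_left _ hgpos, Nat.mul_div_cancel_left _ hgpos]
    push_cast at hcong
    rw [mul_left_comm] at hcong
    exact Int.ModEq.mul_left_cancel' (by exact_mod_cast hgpos.ne') hcong
  refine ⟨?_, ?_, ?_⟩
  · have : Int.gcd ((x.val / Nat.gcd x.val L : ℕ) : ℤ) (f (Nat.gcd x.val L)) = 1 := by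
      rw [Int.gcd_natCast_natCast]
      exact Nat.Coprime.coprime_dvd_right hmd (Nat.coprime_div_gcd_div_gcd hgpos)
    exact jacobiSym.eq_one_or_neg_one this
  · rw [hscale (-x) (-1) (by simp) isCoprime_one_left.neg_left, jacobiSym.at_neg_one hmodd,
      ZMod.χ₄_nat_one_mod_four (by omega), one_mul]
  · rw [hscale (2 * x) 2 (by simp) (by
      exact_mod_cast Nat.isCoprime_iff_coprime.2 hodd.coprime_two_left), jacobiSym.at_two hmodd,
      ZMod.χ₈_nat_eq_if_mod_eight]
    have : f (x.val.gcd L) % 2 = 1 := by omega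
    simp [hm8, this]

lemma aux_pow (p : ℕ) [Fact p.Prime] (hsafe : ((p - 1) / 2).Prime) (hmod : p % 8 = 7) :
    (∀ a b : ℕ, a < (p - 1) / 2 → b < (p - 1) / 2 → (2 : ZMod p) ^ a = 2 ^ b → a = b) ∧
    (∀ a b : ℕ, (2 : ZMod p) ^ a ≠ - 2 ^ b) := by
  have h20 : (2 : ZMod p) ≠ 0 := by
    intro h
    have : ((2 : ℕ) : ZMod p) = 0 := by exact_mod_cast h
    rw [ZMod.natCast_eq_zero_iff] at this
    have := Nat.le_of_dvd (by norm_num) this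
    omega
  have hq : (2 : ZMod p) ^ ((p - 1) / 2) = 1 := by
    have e : (p - 1) / 2 = p / 2 := by omega
    rw [e, ← ZMod.euler_criterion p h20]
    exact (ZMod.exists_sq_eq_two_iff (by omega)).2 (Or.inr hmod)
  have hqodd : Odd ((p - 1) / 2) := by rw [Nat.odd_iff]; omega
  constructor
  · intro a b ha hb h
    have : Fact ((p - 1) / 2).Prime := ⟨hsafe⟩
    have ho : orderOf (2 : ZMod p) = (p - 1) / 2 := by
      apply orderOf_eq_prime hq
      intro h
      have : (1 : ZMod p) = 0 := by linear_combination h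
      exact one_ne_zero this
    exact pow_injOn_Iio_orderOf (by simpa [ho] using ha) (by simpa [ho] using hb) h
  · intro a b h
    have h1 := congrArg (fun x => x ^ ((p - 1) / 2)) h
    rw [hqodd.neg_pow, ← pow_mul, ← pow_mul, mul_comm a, mul_comm b, pow_mul, pow_mul, hq,
      one_pow, one_pow] at h1
    exact h20 (by linear_combination h1)

lemma aux_S3 (p w : ℕ) (hp : p.Prime) (hw : w ≠ 0) (hsafe : ((p - 1) / 2).Prime)
    (hmod : p % 8 = 7) :
    ∃ S : Finset (ZMod (p * w)), (∀ x ∈ S, x ≠ 0 ∧ (p : ZMod (p * w)) * x = 0 ∧ -x ∈ S ∧ 2 * x ∉ S) ∧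
      S.card = (p - 1) / 2 - 1 := by
  classical
  have : Fact p.Prime := ⟨hp⟩
  obtain ⟨F1, F2⟩ := aux_pow p hsafe hmod
  have key : ∀ a b : ℤ, (a : ZMod (p * w)) * (w : ZMod (p * w)) = b * w → (a : ZMod p) = b := by
    intro a b h
    have h' : ((a * w : ℤ) : ZMod (p * w)) = ((b * w : ℤ) : ZMod (p * w)) := by
      push_cast; exact h
    rw [ZMod.intCast_eq_intCast_iff] at h'
    rw [ZMod.intCast_eq_intCast_iff]
    push_cast at h'
    exact Int.ModEq.mul_right_cancel' (by exact_mod_cast hw) h'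
  set e : ℕ → ZMod (p * w) := fun a => 2 ^ a * (w : ZMod (p * w)) with he
  have k1 : ∀ a b, e a = e b → (2 : ZMod p) ^ a = 2 ^ b := by
    intro a b h
    have := key (2 ^ a) (2 ^ b) (by push_cast; exact h)
    push_cast at this; exact this
  have k2 : ∀ a b, e a ≠ - e b := by
    intro a b h
    have := key (2 ^ a) (- 2 ^ b) (by push_cast; simp only [he] at h; rw [h]; ring)
    push_cast at this; exact F2 a b this
  have k0 : ∀ a, e a ≠ 0 := fun a h => k2 a a (by rw [h]; simp)
  have k3 : ∀ a, 2 * e a = e (a + 1) := fun a => by simp only [he]; ring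
  have kp : ∀ a, (p : ZMod (p * w)) * e a = 0 := fun a => by
    have : ((p * w : ℕ) : ZMod (p * w)) = 0 := ZMod.natCast_self _
    push_cast at this
    simp only [he]; linear_combination 2 ^ a * this
  have hqodd : ((p - 1) / 2) % 2 = 1 := by omega
  set n := ((p - 1) / 2 - 1) / 2 with hn
  set P := (Finset.range n).image (fun i => e (2 * i)) with hP
  have hPm : ∀ x ∈ P, ∃ i < n, x = e (2 * i) := fun x hx => by
    obtain ⟨i, hi, rfl⟩ := Finset.mem_image.1 hx
    exact ⟨i, Finset.mem_range.1 hi, rfl⟩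
  clear_value P
  have hPd : ∀ x ∈ P, 2 * x ∉ P := by
    intro x hx h
    obtain ⟨i, hi, rfl⟩ := hPm x hx
    obtain ⟨j, hj, h⟩ := hPm _ h
    rw [k3] at h
    have := F1 _ _ (by omega) (by omega) (k1 _ _ h)
    omega
  have hPd' : ∀ x ∈ P, -(2 * x) ∉ P := by
    intro x hx h
    obtain ⟨i, hi, rfl⟩ := hPm x hx
    obtain ⟨j, hj, h⟩ := hPm _ h
    rw [k3] at h
    exact k2 _ _ h.symm
  refine ⟨P ∪ P.image (fun x => -x), ?_, ?_⟩
  · have hmem : ∀ x, x ∈ P ∪ P.image (fun x => -x) ↔ x ∈ P ∨ -x ∈ P := by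
      intro x
      rw [Finset.mem_union, Finset.mem_image]
      constructor
      · rintro (h | ⟨y, hy, rfl⟩)
        · exact Or.inl h
        · right; simpa using hy
      · rintro (h | h)
        · exact Or.inl h
        · exact Or.inr ⟨_, h, by simp⟩
    intro x hx
    rw [hmem] at hx
    rw [hmem, hmem, neg_neg]
    refine ⟨?_, ?_, hx.symm, ?_⟩
    · rintro rfl
      rw [neg_zero, or_self] at hx
      obtain ⟨i, -, h⟩ := hPm _ hx
      exact k0 _ h.symm
    · rcases hx with h | h
      · obtain ⟨i, -, rfl⟩ := hPm _ h
        exact kp _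
      · obtain ⟨i, -, h⟩ := hPm _ h
        have := kp (2 * i)
        rw [← h] at this
        linear_combination -this
    · rintro (h | h) <;> rcases hx with hx | hx
      · exact hPd _ hx h
      · exact hPd' _ hx (by simpa using h)
      · exact hPd' _ hx h
      · exact hPd _ hx (by simpa using h)
  · rw [Finset.card_union_of_disjoint, Finset.card_image_of_injective _ neg_injective, hP,
      Finset.card_image_of_injOn, Finset.card_range]
    · have := hsafe.two_le
      omega
    · intro i hi j hj h
      have hi := Finset.mem_range.1 hi
      have hj := Finset.mem_range.1 hj
      have := F1 _ _ (by omega) (by omega) (k1 _ _ h)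
      omega
    · rw [Finset.disjoint_left]
      intro x hx h
      obtain ⟨y, hy, rfl⟩ := Finset.mem_image.1 h
      obtain ⟨i, -, hi⟩ := hPm _ hx
      obtain ⟨j, -, rfl⟩ := hPm _ hy
      exact k2 _ _ hi.symm

lemma aux_lower (L phat : ℕ) [NeZero L] (hodd : Odd L) (h3 : 3 ∣ L) (h9 : ¬ 9 ∣ L)
    (hphat : phat.Prime) (hdvd : phat ∣ L) (hsafe : ((phat - 1) / 2).Prime)
    (hmod : phat % 8 = 7) (hsq : ¬ phat ^ 2 ∣ L)
    (hp : ∀ p : ℕ, p.Prime → p ∣ L → p ≠ 3 → p ≠ phat → p % 8 = 5) :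
    ∃ C : Finset (Finset (ZMod L)), IsCAC L 3 C ∧ (∀ I ∈ C, IsEquiDiff I) ∧
      (L - 1) / 4 ≤ C.card := by
  classical
  have h4 := aux_Lmod4 L phat hodd h3 h9 hphat hdvd hmod hsq hp
  have hL0 : 0 < L := Nat.pos_of_ne_zero (NeZero.ne L)
  obtain ⟨c, hc⟩ := aux_color L phat hodd h9 hphat hmod hsq hp
  have hS3 : ∃ S : Finset (ZMod L), (∀ x ∈ S, x ≠ 0 ∧ (phat : ZMod L) * x = 0 ∧ -x ∈ S ∧ 2 * x ∉ S) ∧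
      S.card = (phat - 1) / 2 - 1 := by
    obtain ⟨w, rfl⟩ := hdvd
    exact aux_S3 phat w hphat (by rintro rfl; simp at hL0) hsafe hmod
  obtain ⟨S3, h31, h32⟩ := hS3
  set E : Finset (ZMod L) := Finset.univ.filter (fun x => 3 * x ≠ 0 ∧ (phat : ZMod L) * x ≠ 0) with hE
  set S1 := E.filter (fun x => c x = 1) with hS1
  set S2 : Finset (ZMod L) := Finset.univ.filter (fun x => x ≠ 0 ∧ 3 * x = 0) with hS2
  have mE : ∀ x, x ∈ E ↔ 3 * x ≠ 0 ∧ (phat : ZMod L) * x ≠ 0 := fun x => by simp [hE]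
  have mS2 : ∀ x, x ∈ S2 ↔ x ≠ 0 ∧ 3 * x = 0 := fun x => by simp [hS2]
  have mS1 : ∀ x, x ∈ S1 ↔ x ∈ E ∧ c x = 1 := fun x => by simp [hS1]
  have dbl : ∀ x ∈ E, 2 * x ∈ E := by
    intro x hx
    rw [mE] at hx ⊢
    exact ⟨fun h => hx.1 (aux_two hodd _ (by linear_combination h)),
      fun h => hx.2 (aux_two hodd _ (by linear_combination h))⟩
  -- no element has both orders
  have h3p : ∀ x : ZMod L, 3 * x = 0 → (phat : ZMod L) * x = 0 → x = 0 := by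
    intro x h1 h2
    have hcop : IsCoprime (3 : ℤ) (phat : ℤ) := by
      have : Nat.Coprime 3 phat := by
        rw [Nat.coprime_primes Nat.prime_three hphat]; rintro rfl; omega
      exact_mod_cast Nat.isCoprime_iff_coprime.2 this
    obtain ⟨a, b, hab⟩ := hcop
    have hab' : ((a * 3 + b * phat : ℤ) : ZMod L) = 1 := by rw [hab]; simp
    push_cast at hab'
    linear_combination (-x) * hab' + a * h1 + b * h2
  -- cardinalities
  have cE1 : E.card ≤ 2 * S1.card := by
    have hle : (E.filter (fun x => ¬ c x = 1)).card ≤ S1.card := by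
      apply Finset.card_le_card_of_injOn (fun x => 2 * x)
      · intro x hx
        have hx := Finset.mem_filter.1 hx
        have hcx := hc x ((mE x).1 hx.1).1 ((mE x).1 hx.1).2
        refine (mS1 _).2 ⟨dbl x hx.1, ?_⟩
        have := hcx.1.resolve_left hx.2
        rw [hcx.2.2, this]; norm_num
      · intro x _ y _ h
        exact sub_eq_zero.1 (aux_two hodd _ (by simp only at h; linear_combination h))
    have := Finset.card_filter_add_card_filter_not (s := E) (fun x => c x = 1)
    rw [← hS1] at this
    omega
  have tors : ∀ n : ℕ, 0 < n → (Finset.univ.filter (fun x : ZMod L => (n : ZMod L) * x = 0)).card ≤ n := by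
    intro n hn
    have := IsAddCyclic.card_nsmul_eq_zero_le (α := ZMod L) hn
    simpa [nsmul_eq_mul] using this
  have cE : L ≤ E.card + phat + S2.card := by
    have hu : (Finset.univ : Finset (ZMod L)) ⊆
        E ∪ Finset.univ.filter (fun x : ZMod L => (phat : ZMod L) * x = 0) ∪ S2 := by
      intro x _
      simp only [Finset.mem_union, mE, mS2, Finset.mem_filter, Finset.mem_univ, true_and]
      by_cases hx : x = 0
      · simp [hx]
      · tauto
    have h1 := Finset.card_le_card hu
    rw [Finset.card_univ, ZMod.card] at h1
    have h2 := Finset.card_union_le (E ∪ Finset.univ.filter (fun x : ZMod L => (phat : ZMod L) * x = 0)) S2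
    have h5 := Finset.card_union_le E (Finset.univ.filter (fun x : ZMod L => (phat : ZMod L) * x = 0))
    have h6 := tors phat hphat.pos
    omega
  have cS2 : 2 ≤ S2.card := by
    obtain ⟨k, rfl⟩ := h3
    have hk0 : (k : ZMod (3 * k)) ≠ 0 := by
      intro h
      rw [ZMod.natCast_eq_zero_iff] at h
      have := Nat.le_of_dvd (by omega) h
      omega
    have hk3 : (3 : ZMod (3 * k)) * k = 0 := by
      have := ZMod.natCast_self (3*k); push_cast at this; exact this
    apply Finset.one_lt_card.2
    refine ⟨k, (mS2 _).2 ⟨hk0, hk3⟩, -k, (mS2 _).2 ⟨neg_ne_zero.2 hk0, by linear_combination -hk3⟩, ?_⟩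
    intro h
    exact hk0 (aux_two hodd _ (by linear_combination h))
  have d12 : Disjoint S1 S2 := by
    rw [Finset.disjoint_left]; intro x hx hy
    exact ((mE x).1 ((mS1 x).1 hx).1).1 ((mS2 x).1 hy).2
  have d3 : Disjoint (S1 ∪ S2) S3 := by
    rw [Finset.disjoint_left]; intro x hx hy
    obtain ⟨y0, yp, -, -⟩ := h31 x hy
    rcases Finset.mem_union.1 hx with hx | hx
    · exact ((mE x).1 ((mS1 x).1 hx).1).2 yp
    · exact y0 (h3p x ((mS2 x).1 hx).2 yp)
  have hcard : (S1 ∪ S2 ∪ S3).card = S1.card + S2.card + S3.card := by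
    rw [Finset.card_union_of_disjoint d3, Finset.card_union_of_disjoint d12]
  obtain ⟨C, hC1, hC2, hC3⟩ := aux_construct hodd (S1 ∪ S2 ∪ S3) (by
      intro h
      rcases Finset.mem_union.1 h with h | h
      · rcases Finset.mem_union.1 h with h | h
        · exact ((mE _).1 ((mS1 _).1 h).1).1 (by simp)
        · exact ((mS2 _).1 h).1 rfl
      · exact (h31 _ h).1 rfl) (by
      intro x h
      rcases Finset.mem_union.1 h with h | h
      · rcases Finset.mem_union.1 h with h | h
        · apply Finset.mem_union_left
          apply Finset.mem_union_left
          obtain ⟨hxE, hx1⟩ := (mS1 _).1 h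
          rw [mE] at hxE
          rw [mS1, mE, (hc x hxE.1 hxE.2).2.1]
          exact ⟨⟨by simpa using hxE.1, by simpa using hxE.2⟩, hx1⟩
        · apply Finset.mem_union_left
          apply Finset.mem_union_right
          rw [mS2] at h ⊢
          simpa using h
      · apply Finset.mem_union_right
        exact (h31 x h).2.2.1) (by
      intro x h h2
      rcases Finset.mem_union.1 h with h | h
      · rcases Finset.mem_union.1 h with h | h
        · exfalso
          obtain ⟨hxE, hx1⟩ := (mS1 _).1 h
          have h2E := dbl x hxE
          have hcx := (hc x ((mE x).1 hxE).1 ((mE x).1 hxE).2).2.2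
          rw [mE] at h2E
          rcases Finset.mem_union.1 h2 with h2 | h2
          · rcases Finset.mem_union.1 h2 with h2 | h2
            · have := ((mS1 _).1 h2).2
              rw [hcx, hx1] at this
              norm_num at this
            · exact h2E.1 ((mS2 _).1 h2).2
          · exact h2E.2 (h31 _ h2).2.1
        · linear_combination ((mS2 _).1 h).2
      · exfalso
        obtain ⟨x0, xp, -, xd⟩ := h31 x h
        have hp2 : (phat : ZMod L) * (2 * x) = 0 := by linear_combination 2 * xp
        rcases Finset.mem_union.1 h2 with h2 | h2
        · rcases Finset.mem_union.1 h2 with h2 | h2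
          · exact ((mE _).1 ((mS1 _).1 h2).1).2 hp2
          · exact ((mS2 _).1 h2).1 (h3p _ ((mS2 _).1 h2).2 hp2)
        · exact xd h2)
  refine ⟨C, hC1, hC2, ?_⟩
  have := hsafe.two_le
  omega

end aux

theorem MCAC_div3_safe_prime (L phat : ℕ) (hodd : Odd L) (h3 : 3 ∣ L) (h9 : ¬ 9 ∣ L)
    (hphat : phat.Prime) (hdvd : phat ∣ L) (hsafe : ((phat - 1) / 2).Prime)
    (hmod : phat % 8 = 7) (hsq : ¬ phat ^ 2 ∣ L)
    (hp : ∀ p : ℕ, p.Prime → p ∣ L → p ≠ 3 → p ≠ phat → p % 8 = 5) :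
    MCAC L 3 = (L - 1) / 4 ∧ MeCAC L 3 = (L - 1) / 4 := by
  have h4 := aux_Lmod4 L phat hodd h3 h9 hphat hdvd hmod hsq hp
  have : NeZero L := ⟨by rintro rfl; simp at h4⟩
  obtain ⟨C, hC1, hC2, hC3⟩ := aux_lower L phat hodd h3 h9 hphat hdvd hsafe hmod hsq hp
  have hup : ∀ C : Finset (Finset (ZMod L)), IsCAC L 3 C → C.card ≤ (L - 1) / 4 := by
    obtain ⟨k, rfl⟩ := h3
    exact fun C hC => aux_upper hodd h4 C hC
  have hCc : C.card = (L - 1) / 4 := le_antisymm (hup C hC1) hC3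
  constructor
  · refine IsGreatest.csSup_eq ⟨⟨C, hC1, hCc⟩, ?_⟩
    rintro n ⟨D, hD, rfl⟩
    exact hup D hD
  · refine IsGreatest.csSup_eq ⟨⟨C, hC1, hC2, hCc⟩, ?_⟩
    rintro n ⟨D, hD, -, rfl⟩
    exact hup D hD
end
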